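/- Let G be the CPDAG of the Markov equivalence class of a DAG. Then G contains no partially directed cycle. -/

import Mathlib

/-- A directed acyclic graph on node set `V`: a directed edge relation with no
directed cycles (no edge `a → b` together with a directed path from `b` back to `a`). -/
structure Dag (V : Type*) where
  edge : V → V → Prop
  acyclic : ∀ a b : V, edge a b → ¬ Relation.ReflTransGen edge b a

variable {V : Type*}

namespace Dag

/-- `a` is an ancestor of `b` (equivalently, `b` is a descendant of `a`):
there is a directed path from `a` to `b`; every node is its own ancestor. -/
def Anc (D : Dag V) (a b : V) : Prop := Relation.ReflTransGen D.edge a b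

/-- `a` and `b` are adjacent (joined by an edge in either direction). -/
def Adj (D : Dag V) (a b : V) : Prop := D.edge a b ∨ D.edge b a

/-- The parents of `x` in the DAG `D`. -/
def Pa (D : Dag V) (x : V) : Set V := {a | D.edge a x}

/-- The Markov blanket of `x`: parents, children, and parents of children of `x`
(excluding `x` itself). -/
def MB (D : Dag V) (x : V) : Set V :=
  {v | v ≠ x ∧ (D.edge v x ∨ D.edge x v ∨ ∃ c : V, D.edge x c ∧ D.edge v c)}

end Dag

/-- A path between `x` and `y` with respect to an adjacency relation `A`:
a sequence of distinct nodes, starting at `x` and ending at `y`, in which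
consecutive nodes are adjacent. `n` is the number of edges of the path. -/
structure GPath (A : V → V → Prop) (x y : V) where
  n : ℕ
  f : Fin (n + 1) → V
  inj : Function.Injective f
  first : f ⟨0, by omega⟩ = x
  last : f ⟨n, by omega⟩ = y
  adj : ∀ i : Fin n, A (f i.castSucc) (f i.succ)

namespace GPath

/-- The non-endpoint node at position `i` of the path `p` is a collider with respect
to the directed edge relation `E`: both incident edges of the path point into it. -/
def ColliderAt {A : V → V → Prop} {x y : V} (p : GPath A x y)
    (E : V → V → Prop) (i : ℕ) : Prop :=
  ∃ (_ : 0 < i) (_ : i < p.n),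
    E (p.f ⟨i - 1, by omega⟩) (p.f ⟨i, by omega⟩) ∧
    E (p.f ⟨i + 1, by omega⟩) (p.f ⟨i, by omega⟩)

/-- The path `p` is blocked by the node set `S` in the DAG `D`: it contains a
non-collider that lies in `S`, or a collider such that neither the collider nor any
of its descendants lies in `S`. -/
def Blocked {A : V → V → Prop} {x y : V} (p : GPath A x y)
    (D : Dag V) (S : Set V) : Prop :=
  ∃ (i : ℕ) (_ : 0 < i) (_ : i < p.n),
    (¬ p.ColliderAt D.edge i ∧ p.f ⟨i, by omega⟩ ∈ S) ∨
    (p.ColliderAt D.edge i ∧ ∀ d : V, D.Anc (p.f ⟨i, by omega⟩) d → d ∉ S)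

end GPath

namespace Dag

/-- `x` and `y` are d-separated by `S` in the DAG `D`: every path between `x` and `y`
is blocked by `S`. -/
def dSep (D : Dag V) (x y : V) (S : Set V) : Prop :=
  ∀ p : GPath D.Adj x y, p.Blocked D S

/-- Two DAGs on the same node set are Markov equivalent if they have exactly the same
d-separation relations. -/
def MEquiv (D D' : Dag V) : Prop :=
  ∀ (x y : V) (S : Set V), D.dSep x y S ↔ D'.dSep x y S

/-- The edge between `a` and `b` is directed `a → b` in the CPDAG of the Markov
equivalence class of `D`: the edge `a → b` holds in every DAG Markov equivalent to `D`. -/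
def CpDir (D : Dag V) (a b : V) : Prop :=
  ∀ D' : Dag V, D.MEquiv D' → D'.edge a b

/-- The edge between `a` and `b` is undirected (`a − b`) in the CPDAG: `a` and `b` are
adjacent (the CPDAG has the same adjacencies as the DAGs of the MEC) but the edge is not
directed either way in the CPDAG. -/
def CpUndir (D : Dag V) (a b : V) : Prop :=
  D.Adj a b ∧ ¬ D.CpDir a b ∧ ¬ D.CpDir b a

/-- `Pa_G(a)`: the nodes with a directed edge into `a` in the CPDAG. -/
def CpPa (D : Dag V) (a : V) : Set V := {p | D.CpDir p a}

/-- `Ch_G(a)`: the nodes `b` with the edge directed `a → b` in the CPDAG. -/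
def CpCh (D : Dag V) (a : V) : Set V := {c | D.CpDir a c}

/-- `Sib_G(a)`: the nodes joined to `a` by an undirected edge in the CPDAG. -/
def CpSib (D : Dag V) (a : V) : Set V := {s | D.CpUndir a s}

end Dag

namespace GPath

/-- `p` is a possibly directed path in the CPDAG: no edge on it is directed
backwards (as `V_i ← V_{i+1}`) in the CPDAG. -/
def CpPossiblyDirected {D : Dag V} {x y : V} (p : GPath D.Adj x y) : Prop :=
  ∀ i : Fin p.n, ¬ D.CpDir (p.f i.succ) (p.f i.castSucc)

/-- `p` is a (fully) directed path in the CPDAG: every edge on it is directed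
forwards in the CPDAG. -/
def CpDirected {D : Dag V} {x y : V} (p : GPath D.Adj x y) : Prop :=
  ∀ i : Fin p.n, D.CpDir (p.f i.castSucc) (p.f i.succ)

/-- `p` is a directed path from `x` to `y` in the DAG `D` itself. -/
def DirectedIn {D : Dag V} {x y : V} (p : GPath D.Adj x y) : Prop :=
  ∀ i : Fin p.n, D.edge (p.f i.castSucc) (p.f i.succ)

/-- `p` is unshielded: for every three consecutive nodes on it, the first and the
third are non-adjacent. -/
def Unshielded {D : Dag V} {x y : V} (p : GPath D.Adj x y) : Prop :=
  ∀ (i : ℕ) (_ : i + 2 ≤ p.n), ¬ D.Adj (p.f ⟨i, by omega⟩) (p.f ⟨i + 2, by omega⟩)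

end GPath

namespace Dag

/-- `x` is a possible ancestor of `y` in the CPDAG: there is a possibly directed path
from `x` to `y`. -/
def PossAn (D : Dag V) (x y : V) : Prop :=
  ∃ p : GPath D.Adj x y, p.CpPossiblyDirected

/-- `x` is an explicit ancestor of `y` in the CPDAG: there is a fully directed path
from `x` to `y` in the CPDAG. -/
def ExplAn (D : Dag V) (x y : V) : Prop :=
  ∃ p : GPath D.Adj x y, p.CpDirected

/-- The CPDAG is amenable relative to `(x, y)`: every possibly directed path from
`x` to `y` starts with a directed edge out of `x`. -/
def Amenable (D : Dag V) (x y : V) : Prop :=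
  ∀ p : GPath D.Adj x y, p.CpPossiblyDirected →
    ∀ _ : 0 < p.n, D.CpDir (p.f ⟨0, by omega⟩) (p.f ⟨1, by omega⟩)

/-- `S` is a valid adjustment set for `(x, y)` in the DAG `D`:
(i) no element of `S` is a descendant of any node `w ≠ x` lying on a directed path
from `x` to `y`, and (ii) every path between `x` and `y` that is not a directed path
from `x` to `y` is blocked by `S`. -/
def ValidAdjustment (D : Dag V) (x y : V) (S : Set V) : Prop :=
  (∀ s ∈ S, ∀ w : V, w ≠ x → D.Anc x w → D.Anc w y → ¬ D.Anc w s) ∧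
  (∀ p : GPath D.Adj x y, ¬ p.DirectedIn → p.Blocked D S)

/-- `Cn_D(x, y)`: the nodes `w ≠ x` lying on some directed path from `x` to `y` in `D`. -/
def Cn (D : Dag V) (x y : V) : Set V := {w | w ≠ x ∧ D.Anc x w ∧ D.Anc w y}

end Dag

/-!
The directed edges of the CPDAG turn out to be those forced by Meek's orientation rules (in the
form of `Compelled`). An induction over the rules shows that a forced edge `a → b` and an unforced
adjacency `b − c` give a forced edge `a → c`. Hence a partially directed cycle could be contracted
to a cycle of forced edges, which is impossible since those are edges of the DAG.

That every unforced edge is really undirected has two ingredients. First, the graph of unforced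
edges has simplicial vertices, so it has a perfect ordering beginning at any given vertex, and
orienting it along such an ordering creates no new v-structure; either direction of an unforced
edge thus occurs in a DAG with the same skeleton and v-structures. Second, such DAGs are Markov
equivalent (Verma–Pearl). Both directions of this are read off from Lauritzen's criterion, which
expresses d-separation as separation in the moral graph of an ancestral set: the criterion
determines adjacencies and v-structures, and it is invariant under reversal of a covered edge, by
which Chickering connects any two DAGs with the same skeleton and v-structures.
-/

theorem acyclic_sup {M U : V → V → Prop} (hU : ∀ a b, U a b → ¬ Relation.ReflTransGen U b a)
    (hM : ∀ a b, M a b → ¬ Relation.ReflTransGen (M ⊔ U) b a) (a b : V) (hab : (M ⊔ U) a b) :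
    ¬ Relation.ReflTransGen (M ⊔ U) b a := by
  have split : ∀ c, Relation.ReflTransGen (M ⊔ U) b c → Relation.ReflTransGen U b c ∨
      ∃ p q, Relation.ReflTransGen (M ⊔ U) b p ∧ M p q ∧ Relation.ReflTransGen (M ⊔ U) q c := by
    intro c hbc
    induction hbc with
    | refl => exact .inl .refl
    | @tail c d hbc hcd ih =>
      rcases ih, hcd with ⟨hU' | ⟨p, q, hbp, hpq, hqc⟩, hM' | hU''⟩
      · exact .inr ⟨c, d, hbc, hM', .refl⟩
      · exact .inl (hU'.tail hU'')
      · exact .inr ⟨p, q, hbp, hpq, hqc.tail (.inl hM')⟩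
      · exact .inr ⟨p, q, hbp, hpq, hqc.tail (.inr hU'')⟩
  intro hba
  rcases hab with hab | hab
  · exact hM a b hab hba
  · rcases split a hba with hba | ⟨p, q, hbp, hpq, hqa⟩
    · exact hU a b hab hba
    · exact hM p q hpq ((hqa.tail (.inr hab)).trans hbp)

theorem eq_of_reflTransGen {R : V → V → Prop} {a b : V} (h : ∀ c, R a c → c = a)
    (hab : Relation.ReflTransGen R a b) : b = a := by
  induction hab with
  | refl => rfl
  | tail _ hbc ih => exact h _ (ih ▸ hbc)

section PerfectRanking

/-- A numbering of the vertices in `s` such that the neighbours of each vertex that come before it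
form a clique: the reverse of a perfect elimination ordering of the subgraph induced on `s`. -/
structure IsPerfectRanking (G : SimpleGraph V) (s : Finset V) (r : V → ℕ) : Prop where
  injOn : Set.InjOn r s
  isClique : ∀ v ∈ s, G.IsClique {a | a ∈ s ∧ G.Adj a v ∧ r a < r v}

variable {G : SimpleGraph V} {s K L : Finset V} {r : V → ℕ} {t : V}

theorem IsPerfectRanking.insert [DecidableEq V] (hr : IsPerfectRanking G s r) (ht : t ∉ s) (m : ℕ)
    (hbefore : G.IsClique {a | a ∈ s ∧ G.Adj a t ∧ r a < m})
    (hafter : ∀ v ∈ s, G.Adj v t → m ≤ r v → ∀ a ∈ s, G.Adj a v → r a < r v → G.Adj a t) :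
    IsPerfectRanking G (insert t s) (Function.update (fun v => 2 * r v + 1) t (2 * m)) := by
  have hne : ∀ {v}, v ∈ s → v ≠ t := fun hv => ne_of_mem_of_not_mem hv ht
  refine ⟨fun a ha b hb hab => ?_, fun v hv => ?_⟩
  · have := hr.injOn.eq_iff (x := a) (y := b)
    grind
  · rcases Finset.mem_insert.1 hv with rfl | hvs
    · exact hbefore.subset fun a ha => by grind
    · have hclique := hr.isClique v hvs
      by_cases htv : G.Adj v t ∧ m ≤ r v
      · refine (hclique.insert fun a ⟨ha, hav, hlt⟩ _ =>
          (hafter v hvs htv.1 htv.2 a ha hav hlt).symm).subset fun a ha => ?_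
        simp only [Set.mem_insert_iff, Set.mem_ofPred_eq] at ha ⊢
        grind
      · refine hclique.subset fun a ha => ?_
        simp only [Set.mem_ofPred_eq] at ha ⊢
        grind [G.adj_comm]

theorem IsPerfectRanking.exists_initial_subset (hr : IsPerfectRanking G s r) (hL : G.IsClique L)
    (hinit : ∀ l ∈ L, ∀ v ∈ s, v ∉ L → r l < r v) (hK : K ⊆ L) (hLs : L ⊆ s) :
    ∃ r', IsPerfectRanking G s r' ∧ ∀ k ∈ K, ∀ v ∈ s, v ∉ K → r' k < r' v := by
  classical
  have hlt : ∀ v ∈ s, r v < s.sup r + 1 := fun v hv => Nat.lt_succ_of_le (Finset.le_sup hv)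
  refine ⟨fun v => if v ∈ K then r v else s.sup r + 1 + r v,
    ⟨fun a ha b hb hab => ?_, fun v hv => ?_⟩, fun k hk v _ hvK => ?_⟩
  · have := hr.injOn.eq_iff (x := a) (y := b)
    grind
  · by_cases hvL : v ∈ L
    · exact hL.subset fun a ha => by_contra fun haL => by grind
    · exact (hr.isClique v hv).subset fun a ha => by grind
  · grind

theorem exists_isPerfectRanking_initial
    (hG : ∀ s : Finset V, s.Nonempty → ∃ t ∈ s, G.IsClique {a | a ∈ s ∧ G.Adj a t})
    (s K : Finset V) (hKs : K ⊆ s) (hK : G.IsClique K) :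
    ∃ r, IsPerfectRanking G s r ∧ ∀ k ∈ K, ∀ v ∈ s, v ∉ K → r k < r v := by
  classical
  induction s using Finset.strongInduction generalizing K with
  | H s ih =>
    rcases s.eq_empty_or_nonempty with rfl | hs
    · exact ⟨fun _ => 0, ⟨by simp, by simp⟩, by simp⟩
    obtain ⟨t, ht, hclique⟩ := hG s hs
    by_cases htK : t ∈ K
    · -- Rank the neighbours `N` of `t` first and put `t` before them; then move `K ⊆ N ∪ {t}` up.
      let N := {a ∈ s.erase t | G.Adj a t}
      have hN : G.IsClique N := hclique.subset fun a ha => by grind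
      obtain ⟨r, hr, hinit⟩ := ih _ (Finset.erase_ssubset ht) N (Finset.filter_subset ..) hN
      have hr' := hr.insert (Finset.notMem_erase t s) 0 (by simp) (by grind)
      rw [Finset.insert_erase ht] at hr'
      refine hr'.exists_initial_subset (L := insert t N) ?_ (by grind) (fun k hk => ?_) (by grind)
      · rw [Finset.coe_insert, SimpleGraph.isClique_insert]
        exact ⟨hN, fun a ha _ => (Finset.mem_filter.1 ha).2.symm⟩
      · have := @hK t htK k hk
        grind [G.adj_comm]
    · have hKs' := Finset.subset_erase.2 ⟨hKs, htK⟩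
      obtain ⟨r, hr, hinit⟩ := ih _ (Finset.erase_ssubset ht) K hKs' hK
      have hlt : ∀ v ∈ s.erase t, r v < (s.erase t).sup r + 1 := fun v hv =>
        Nat.lt_succ_of_le (Finset.le_sup hv)
      have hr' := hr.insert (Finset.notMem_erase t s) ((s.erase t).sup r + 1)
        (hclique.subset fun a ha => by grind) (by grind)
      exact ⟨_, Finset.insert_erase ht ▸ hr', by grind⟩

end PerfectRanking

namespace Dag

variable {D D' : Dag V} {a b c d e : V}

section Acyclicity

theorem edge_irrefl (D : Dag V) (a : V) : ¬ D.edge a a := fun h => D.acyclic a a h .refl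

theorem edge_asymm (h : D.edge a b) : ¬ D.edge b a := fun h' => D.acyclic a b h (.single h')

theorem edge_of_edge_of_edge (hab : D.edge a b) (hbc : D.edge b c) (hac : D.Adj a c) :
    D.edge a c :=
  hac.resolve_right fun hca => D.acyclic c a hca (.tail (.single hab) hbc)

theorem Adj.symm (h : D.Adj a b) : D.Adj b a := Or.symm h

theorem Adj.ne (h : D.Adj a b) : a ≠ b := by
  rintro rfl
  exact D.edge_irrefl a (h.elim id id)

theorem not_transGen_edge_self (D : Dag V) (a : V) : ¬ Relation.TransGen D.edge a a := fun h => by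
  obtain ⟨b, hab, hba⟩ := Relation.TransGen.head'_iff.1 h
  exact D.acyclic a b hab hba

theorem wellFounded_edge [Finite V] (D : Dag V) : WellFounded D.edge :=
  have : Std.Irrefl (Relation.TransGen D.edge) := ⟨D.not_transGen_edge_self⟩
  Subrelation.wf .single (Finite.wellFounded_of_trans_of_irrefl (Relation.TransGen D.edge))

theorem wellFounded_flip_edge [Finite V] (D : Dag V) : WellFounded (flip D.edge) :=
  have : Std.Irrefl (flip (Relation.TransGen D.edge)) := ⟨D.not_transGen_edge_self⟩
  have : IsTrans V (flip (Relation.TransGen D.edge)) := ⟨fun _ _ _ h h' => h'.trans h⟩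
  Subrelation.wf (fun h => .single h)
    (Finite.wellFounded_of_trans_of_irrefl (flip (Relation.TransGen D.edge)))

end Acyclicity

section Compelled

/-- A v-structure `a → b ← c` of `D`, with `a` and `c` distinct and non-adjacent. -/
structure VStruct (D : Dag V) (a b c : V) : Prop where
  left : D.edge a b
  right : D.edge c b
  ne : a ≠ c
  not_adj : ¬ D.Adj a c

theorem VStruct.symm (h : D.VStruct a b c) : D.VStruct c b a :=
  ⟨h.right, h.left, h.ne.symm, fun hca => h.not_adj hca.symm⟩

/-- Two DAGs have the same pattern if they have the same skeleton and the same v-structures. By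
the Verma–Pearl theorem (`mEquiv_iff_samePattern`), this is Markov equivalence. -/
structure SamePattern (D D' : Dag V) : Prop where
  adj_iff : ∀ a b, D.Adj a b ↔ D'.Adj a b
  vStruct_iff : ∀ a b c, D.VStruct a b c ↔ D'.VStruct a b c

theorem SamePattern.refl (D : Dag V) : SamePattern D D :=
  ⟨fun _ _ => Iff.rfl, fun _ _ _ => Iff.rfl⟩

theorem SamePattern.symm (h : SamePattern D D') : SamePattern D' D :=
  ⟨fun a b => (h.adj_iff a b).symm, fun a b c => (h.vStruct_iff a b c).symm⟩

theorem SamePattern.trans {D'' : Dag V} (h : SamePattern D D') (h' : SamePattern D' D'') :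
    SamePattern D D'' :=
  ⟨fun a b => (h.adj_iff a b).trans (h'.adj_iff a b),
    fun a b c => (h.vStruct_iff a b c).trans (h'.vStruct_iff a b c)⟩

/-- The edges whose direction is forced by the pattern of `D` through Meek's orientation rules.
In rule 3, Meek asks for undirected edges `d − a − e`; the weaker condition used here, that
`d → a ← e` is not a v-structure, forces `a → b` as well. -/
inductive Compelled (D : Dag V) : V → V → Prop
  | vStruct {a b c : V} : D.VStruct a b c → Compelled D a b
  | rule1 {a b c : V} :
      Compelled D a b → D.edge b c → a ≠ c → ¬ D.Adj a c → Compelled D b c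
  | rule2 {a b c : V} : Compelled D a b → Compelled D b c → D.Adj a c → Compelled D a c
  | rule3 {a b d e : V} : D.VStruct d b e → D.Adj a b → D.Adj d a → D.Adj e a →
      ¬ D.VStruct d a e → Compelled D a b

/-- The undirected part of the CPDAG of `D`: the adjacencies that are not compelled either way. -/
def chainGraph (D : Dag V) : SimpleGraph V where
  Adj a b := D.Adj a b ∧ ¬ D.Compelled a b ∧ ¬ D.Compelled b a
  symm := ⟨fun _ _ h => ⟨h.1.symm, h.2.2, h.2.1⟩⟩
  loopless := ⟨fun _ h => h.1.ne rfl⟩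

theorem Compelled.edge_of_samePattern (hs : SamePattern D D') (h : D.Compelled a b) :
    D'.edge a b := by
  induction h with
  | vStruct h => exact ((hs.vStruct_iff _ _ _).1 h).left
  | rule1 _ hbc hne hac ih =>
    refine ((hs.adj_iff _ _).1 (.inl hbc)).resolve_right fun hcb => edge_asymm hbc ?_
    exact ((hs.vStruct_iff _ _ _).2 ⟨ih, hcb, hne, mt (hs.adj_iff _ _).2 hac⟩).right
  | rule2 _ _ hac ihab ihbc => exact edge_of_edge_of_edge ihab ihbc ((hs.adj_iff _ _).1 hac)
  | rule3 h hab hda hea hn =>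
    obtain ⟨hdb, heb, hne, hde⟩ := (hs.vStruct_iff _ _ _).1 h
    refine ((hs.adj_iff _ _).1 hab).resolve_right fun hba => hn ((hs.vStruct_iff _ _ _).2 ?_)
    exact ⟨edge_of_edge_of_edge hdb hba ((hs.adj_iff _ _).1 hda),
      edge_of_edge_of_edge heb hba ((hs.adj_iff _ _).1 hea), hne, hde⟩

theorem Compelled.edge (h : D.Compelled a b) : D.edge a b := h.edge_of_samePattern (.refl D)

theorem Compelled.not_chainGraph_adj_of_not_adj (hab : D.Compelled a b) (hne : a ≠ c)
    (hac : ¬ D.Adj a c) : ¬ D.chainGraph.Adj b c := fun ⟨hbc, hnbc, hncb⟩ =>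
  hbc.elim (fun hbc => hnbc (.rule1 hab hbc hne hac))
    (fun hcb => hncb (.vStruct (VStruct.symm ⟨hab.edge, hcb, hne, hac⟩)))

theorem Compelled.adj_of_chainGraph_adj (hab : D.Compelled a b) (hbc : D.chainGraph.Adj b c) :
    D.Adj a c := by
  by_contra hac
  refine hab.not_chainGraph_adj_of_not_adj ?_ hac hbc
  rintro rfl
  exact hbc.2.2 hab

theorem Compelled.compelled_or_chainGraph_adj (hab : D.Compelled a b)
    (hbc : D.chainGraph.Adj b c) : D.Compelled a c ∨ D.chainGraph.Adj a c :=
  or_iff_not_imp_left.2 fun hac => ⟨hab.adj_of_chainGraph_adj hbc, hac,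
    fun hca => hbc.2.2 (.rule2 hca hab hbc.1.symm)⟩

theorem VStruct.compelled_of_chainGraph_adj (h : D.VStruct a b d) (hbc : D.chainGraph.Adj b c) :
    D.Compelled a c := by
  have hac : D.Adj a c := (Compelled.vStruct h).adj_of_chainGraph_adj hbc
  have hdc : D.Adj d c := (Compelled.vStruct h.symm).adj_of_chainGraph_adj hbc
  by_contra hn
  exact hbc.2.2 (.rule3 h hbc.1.symm hac hdc fun hv => hn (.vStruct hv))

/-- The property that makes the CPDAG a chain graph. -/
theorem Compelled.trans_chainGraph_adj (hab : D.Compelled a b) (hbc : D.chainGraph.Adj b c) :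
    D.Compelled a c := by
  induction hab generalizing c with
  | vStruct h => exact h.compelled_of_chainGraph_adj hbc
  | rule1 hea hab hne heb ih =>
    refine ((Compelled.rule1 hea hab hne heb).compelled_or_chainGraph_adj hbc).resolve_right ?_
    exact fun hac => (ih hac).not_chainGraph_adj_of_not_adj hne heb hbc.symm
  | rule2 hae heb hab _ ih =>
    exact .rule2 hae (ih hbc) ((Compelled.rule2 hae heb hab).adj_of_chainGraph_adj hbc)
  | rule3 h hab hda hea hn =>
    have hac := (Compelled.rule3 h hab hda hea hn).adj_of_chainGraph_adj hbc
    exact .rule3 ⟨(h.compelled_of_chainGraph_adj hbc).edge,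
      (h.symm.compelled_of_chainGraph_adj hbc).edge, h.ne, h.not_adj⟩ hac hda hea hn

theorem Compelled.not_reflTransGen (hab : D.Compelled a b) :
    ¬ Relation.ReflTransGen (D.Compelled ⊔ D.chainGraph.Adj) b a := by
  have absorb : ∀ c, Relation.ReflTransGen (D.Compelled ⊔ D.chainGraph.Adj) b c →
      Relation.TransGen D.Compelled a c := by
    intro c hbc
    induction hbc with
    | refl => exact .single hab
    | tail _ hcd ih =>
      rcases hcd with hcd | hcd
      · exact ih.tail hcd
      · obtain ⟨p, hap, hpc⟩ := Relation.TransGen.tail'_iff.1 ih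
        exact .tail' hap (hpc.trans_chainGraph_adj hcd)
  exact fun hba => D.not_transGen_edge_self a
    (Relation.TransGen.mono (fun _ _ => Compelled.edge) a a (absorb a hba))

end Compelled

section Reorientation

theorem chainGraph_adj_of_edge_of_edge (hab : D.chainGraph.Adj a b) (hcb : D.chainGraph.Adj c b)
    (eab : D.edge a b) (ecb : D.edge c b) (hac : a ≠ c) : D.chainGraph.Adj a c := by
  refine ⟨by_contra fun hn => hab.2.1 (.vStruct ⟨eab, ecb, hac, hn⟩), fun h => ?_, fun h => ?_⟩
  · exact hab.2.1 (h.trans_chainGraph_adj hcb)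
  · exact hcb.2.1 (h.trans_chainGraph_adj hab)

theorem exists_isClique_chainGraph [Finite V] (D : Dag V) (s : Finset V) (hs : s.Nonempty) :
    ∃ t ∈ s, D.chainGraph.IsClique {a | a ∈ s ∧ D.chainGraph.Adj a t} := by
  obtain ⟨t, ht, hmax⟩ := D.wellFounded_flip_edge.has_min s hs
  have parent : ∀ a ∈ s, D.chainGraph.Adj a t → D.edge a t := fun a ha hat =>
    hat.1.resolve_right (hmax a ha)
  exact ⟨t, ht, fun a ⟨ha, hat⟩ b ⟨hb, hbt⟩ hab =>
    chainGraph_adj_of_edge_of_edge hat hbt (parent a ha hat) (parent b hb hbt) hab⟩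

/-- The orientation of the CPDAG of `D` in which the undirected edges point from smaller to larger
values of `r`. -/
def reorient (D : Dag V) (r : V → ℕ) : Dag V where
  edge := D.Compelled ⊔ fun a b => D.chainGraph.Adj a b ∧ r a < r b
  acyclic := by
    refine acyclic_sup (fun a b hab hba => ?_) fun a b hab hba => ?_
    · have hle : r b ≤ r a :=
        hba.trans_induction_on (fun _ => le_rfl) (fun h => h.2.le) fun _ _ => le_trans
      exact hle.not_gt hab.2
    · exact hab.not_reflTransGen
        (Relation.ReflTransGen.mono (fun _ _ => Or.imp_right And.left) _ _ hba)

theorem adj_reorient_iff {r : V → ℕ} (hr : r.Injective) :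
    (D.reorient r).Adj a b ↔ D.Adj a b := by
  refine ⟨?_, fun h => ?_⟩
  · rintro ((h | h) | (h | h))
    exacts [.inl h.edge, h.1.1, .inr h.edge, h.1.1.symm]
  · by_cases hab : D.Compelled a b
    · exact .inl (.inl hab)
    by_cases hba : D.Compelled b a
    · exact .inr (.inl hba)
    have hch : D.chainGraph.Adj a b := ⟨h, hab, hba⟩
    exact (hr.ne h.ne).lt_or_gt.imp (fun hlt => .inr ⟨hch, hlt⟩) fun hlt => .inr ⟨hch.symm, hlt⟩

theorem samePattern_reorient [Fintype V] {r : V → ℕ}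
    (hr : IsPerfectRanking D.chainGraph Finset.univ r) : SamePattern D (D.reorient r) := by
  have hadj : ∀ a b, (D.reorient r).Adj a b ↔ D.Adj a b := fun _ _ =>
    adj_reorient_iff (Set.injOn_univ.1 (Finset.coe_univ (α := V) ▸ hr.injOn))
  refine ⟨fun a b => (hadj a b).symm, fun a b c => ⟨fun h => ?_, fun h => ?_⟩⟩
  · exact ⟨.inl (.vStruct h), .inl (.vStruct h.symm), h.ne, mt (hadj a c).1 h.not_adj⟩
  · obtain ⟨hab, hcb, hne, hn⟩ := h
    rw [hadj] at hn
    rcases hab, hcb with ⟨hab | ⟨hab, lab⟩, hcb | ⟨hcb, lcb⟩⟩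
    · exact ⟨hab.edge, hcb.edge, hne, hn⟩
    · exact (hab.not_chainGraph_adj_of_not_adj hne hn hcb.symm).elim
    · exact (hcb.not_chainGraph_adj_of_not_adj hne.symm (mt Adj.symm hn) hab.symm).elim
    · have hac := hr.isClique b (Finset.mem_univ b) ⟨Finset.mem_univ a, hab, lab⟩
        ⟨Finset.mem_univ c, hcb, lcb⟩ hne
      exact (hn hac.1).elim

theorem exists_samePattern_edge [Finite V] (h : D.chainGraph.Adj a b) :
    ∃ D', SamePattern D D' ∧ D'.edge a b := by
  cases nonempty_fintype V
  obtain ⟨r, hr, hinit⟩ := exists_isPerfectRanking_initial D.exists_isClique_chainGraph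
    Finset.univ {a} (Finset.subset_univ _) (by simp)
  refine ⟨D.reorient r, samePattern_reorient hr, .inr ⟨h, ?_⟩⟩
  exact hinit a (by simp) b (by simp) (by simpa using h.ne')

end Reorientation

section Moralization

/-- The nodes with a descendant in `W`. -/
def ancestors (D : Dag V) (W : Set V) : Set V := {v | ∃ w ∈ W, D.Anc v w}

/-- The family of `c`: the node `c` together with its parents. -/
def family (D : Dag V) (c : V) : Set V := insert c (D.Pa c)

/-- The reflexive closure of adjacency in the moral graph of the subgraph of `D` induced on the
ancestors of `W`, after deletion of the nodes in `Z`. -/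
def MoralAdj (D : Dag V) (Z W : Set V) (a b : V) : Prop :=
  a ∉ Z ∧ b ∉ Z ∧ ∃ c ∈ D.ancestors W, a ∈ D.family c ∧ b ∈ D.family c

/-- The first `n + 1` values of `f` form a path that is active given `S`: each collider is an
ancestor of `S`, and no tail of an edge is in `Z`. With `Z` equal to `S` without the endpoints, the
latter says that no non-collider is in `S`. -/
structure ActivePath (D : Dag V) (Z S : Set V) (n : ℕ) (f : ℕ → V) : Prop where
  injOn : Set.InjOn f (Set.Iic n)
  step : ∀ i < n, D.edge (f i) (f (i + 1)) ∧ f i ∉ Z ∨ D.edge (f (i + 1)) (f i) ∧ f (i + 1) ∉ Z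
  collider : ∀ i, i + 1 < n → D.edge (f i) (f (i + 1)) → D.edge (f (i + 2)) (f (i + 1)) →
    f (i + 1) ∈ D.ancestors S

/-- There is an active path from `a` to `b`. -/
def ActiveReach (D : Dag V) (Z S : Set V) (a b : V) : Prop :=
  ∃ n f, f 0 = a ∧ f n = b ∧ D.ActivePath Z S n f

variable {x y : V} {S W Z : Set V} {n : ℕ} {f : ℕ → V}

theorem subset_ancestors (D : Dag V) (W : Set V) : W ⊆ D.ancestors W := fun w hw => ⟨w, hw, .refl⟩

theorem ancestors_subset_ancestors (h : S ⊆ D.ancestors W) : D.ancestors S ⊆ D.ancestors W :=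
  fun _ ⟨_, hs, hvs⟩ =>
    let ⟨w, hw, hsw⟩ := h hs
    ⟨w, hw, hvs.trans hsw⟩

theorem ancestors_mono (h : S ⊆ W) : D.ancestors S ⊆ D.ancestors W :=
  ancestors_subset_ancestors (h.trans (D.subset_ancestors W))

theorem mem_ancestors_of_edge (hab : D.edge a b) (hb : b ∈ D.ancestors W) : a ∈ D.ancestors W :=
  let ⟨w, hw, hbw⟩ := hb
  ⟨w, hw, hbw.head hab⟩

theorem ActivePath.zero (D : Dag V) (a : V) : D.ActivePath Z S 0 fun _ => a :=
  ⟨by simp [Set.InjOn], by simp, by simp⟩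

theorem ActivePath.of_le {m : ℕ} (h : D.ActivePath Z S n f) (hmn : m ≤ n) :
    D.ActivePath Z S m f where
  injOn := h.injOn.mono (Set.Iic_subset_Iic.2 hmn)
  step i hi := h.step i (hi.trans_le hmn)
  collider i hi := h.collider i (hi.trans_le hmn)

theorem ActivePath.update (h : D.ActivePath Z S n f) (hb : ∀ i ≤ n, f i ≠ b)
    (hstep : D.edge (f n) b ∧ f n ∉ Z ∨ D.edge b (f n) ∧ b ∉ Z)
    (hcol : ∀ i, i + 1 = n → D.edge (f i) (f n) → D.edge b (f n) → f n ∈ D.ancestors S) :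
    D.ActivePath Z S (n + 1) (Function.update f (n + 1) b) := by
  have hold : ∀ i ≤ n, Function.update f (n + 1) b i = f i := fun i hi =>
    Function.update_of_ne (by omega) ..
  have hnew : Function.update f (n + 1) b (n + 1) = b := Function.update_self ..
  refine ⟨fun i hi j hj hij => ?_, fun i hi => ?_, fun i hi => ?_⟩
  · have := h.injOn.eq_iff (x := i) (y := j)
    simp only [Set.mem_Iic] at *
    grind
  · rcases Nat.lt_succ_iff_lt_or_eq.1 hi with hi | rfl
    · rw [hold i hi.le, hold (i + 1) hi]
      exact h.step i hi
    · rwa [hold i le_rfl, hnew]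
  · rcases Nat.lt_succ_iff_lt_or_eq.1 hi with hi | rfl
    · rw [hold i (by omega), hold (i + 1) hi.le, hold (i + 2) hi]
      exact h.collider i hi
    · rw [hold i (by omega), hold (i + 1) le_rfl, hnew]
      exact hcol i rfl

theorem ActivePath.activeReach_of_step (h : D.ActivePath Z S n f)
    (hstep : D.edge (f n) b ∧ f n ∉ Z ∨ D.edge b (f n) ∧ b ∉ Z)
    (hcol : ∀ i, i + 1 = n → D.edge (f i) (f n) → D.edge b (f n) → f n ∈ D.ancestors S) :
    D.ActiveReach Z S (f 0) b := by
  by_cases hb : ∃ i ≤ n, f i = b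
  · obtain ⟨i, hi, rfl⟩ := hb
    exact ⟨i, f, rfl, rfl, h.of_le hi⟩
  · push Not at hb
    exact ⟨n + 1, _, by simp, by simp, h.update hb hstep hcol⟩

theorem ActiveReach.tail (h : D.ActiveReach Z S x a) (hab : D.edge a b) (ha : a ∉ Z) :
    D.ActiveReach Z S x b := by
  obtain ⟨n, f, rfl, rfl, hf⟩ := h
  exact hf.activeReach_of_step (.inl ⟨hab, ha⟩) fun _ _ _ hba => (edge_asymm hab hba).elim

theorem ActiveReach.trans_anc (h : D.ActiveReach Z S x a) (hZ : Z ⊆ S) (hay : D.Anc a y)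
    (ha : a ∉ D.ancestors S) : D.ActiveReach Z S x y := by
  induction hay using Relation.ReflTransGen.head_induction_on with
  | refl => exact h
  | head hab _ ih =>
    exact ih (h.tail hab fun haZ => ha (D.subset_ancestors S (hZ haZ)))
      (mt (mem_ancestors_of_edge hab) ha)

theorem exists_activePath_of_anc (hZ : Z ⊆ S) (hax : D.Anc a x) (ha : a ∉ D.ancestors S) :
    ∃ n f, f 0 = x ∧ f n = a ∧ D.ActivePath Z S n f ∧ ∀ i ≤ n, D.Anc a (f i) := by
  induction hax using Relation.ReflTransGen.head_induction_on with
  | refl => exact ⟨0, fun _ => x, rfl, rfl, .zero D x, fun _ _ => .refl⟩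
  | @head a b hab _ ih =>
    obtain ⟨n, f, hx, rfl, hf, hdesc⟩ := ih (mt (mem_ancestors_of_edge hab) ha)
    have hfresh : ∀ i ≤ n, f i ≠ a := fun i hi h => D.acyclic a (f n) hab (h ▸ hdesc i hi)
    refine ⟨n + 1, Function.update f (n + 1) a, by simpa, by simp, hf.update hfresh ?_ ?_, ?_⟩
    · exact .inr ⟨hab, fun haZ => ha (D.subset_ancestors S (hZ haZ))⟩
    · exact fun i hi hin _ => (D.acyclic _ _ hin (hdesc i (by omega))).elim
    · intro i hi
      rcases Nat.le_succ_iff.1 hi with hi | rfl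
      · rw [Function.update_of_ne (by omega)]
        exact (hdesc i hi).head hab
      · rw [Function.update_self]
        exact .refl

theorem ActiveReach.of_edge (h : D.ActiveReach Z S x a) (hZ : Z ⊆ S) (hba : D.edge b a)
    (hb : b ∉ Z) (ha : a ∈ D.ancestors (insert x (insert y S))) :
    D.ActiveReach Z S x b ∨ D.ActiveReach Z S x y := by
  by_cases haS : a ∈ D.ancestors S
  · obtain ⟨n, f, rfl, rfl, hf⟩ := h
    exact .inl (hf.activeReach_of_step (.inr ⟨hba, hb⟩) fun _ _ _ _ => haS)
  obtain ⟨w, rfl | rfl | hw, haw⟩ := ha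
  · obtain ⟨n, f, rfl, rfl, hf, hdesc⟩ := exists_activePath_of_anc hZ haw haS
    exact .inl (hf.activeReach_of_step (.inr ⟨hba, hb⟩) fun i hi hin _ =>
      (D.acyclic _ _ hin (hdesc i (by omega))).elim)
  · exact .inr (h.trans_anc hZ haw haS)
  · exact (haS ⟨w, hw, haw⟩).elim

theorem activeReach_of_moralAdj (hZ : Z ⊆ S)
    (h : Relation.ReflTransGen (D.MoralAdj Z (insert x (insert y S))) x a) :
    D.ActiveReach Z S x a ∨ D.ActiveReach Z S x y := by
  induction h with
  | refl => exact .inl ⟨0, fun _ => x, rfl, rfl, .zero D x⟩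
  | tail _ hab ih =>
    obtain ⟨ha, hb, c, hc, hac, hbc⟩ := hab
    refine ih.elim (fun hxa => ?_) .inr
    have hxc : D.ActiveReach Z S x c := hac.elim (fun h => h ▸ hxa) fun h => hxa.tail h ha
    exact hbc.elim (fun h => .inl (h ▸ hxc)) fun h => hxc.of_edge hZ h hb hc

theorem ActivePath.head_mem_ancestors_of_edge (h : D.ActivePath Z S n f) (hS : S ⊆ W)
    (hn : f n ∈ W) {i : ℕ} (hi : i < n) (hedge : D.edge (f i) (f (i + 1))) :
    f (i + 1) ∈ D.ancestors W := by
  induction hk : n - i generalizing i with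
  | zero => omega
  | succ k ih =>
    rcases Nat.lt_or_eq_of_le (Nat.succ_le_of_lt hi) with hi' | rfl
    · rcases h.step (i + 1) hi' with ⟨hfwd, -⟩ | ⟨hbwd, -⟩
      · exact mem_ancestors_of_edge hfwd (ih hi' hfwd (by omega))
      · exact ancestors_mono hS (h.collider i hi' hedge hbwd)
    · exact D.subset_ancestors W hn

theorem ActivePath.head_mem_ancestors_of_edge_symm (h : D.ActivePath Z S n f) (hS : S ⊆ W)
    (h0 : f 0 ∈ W) {i : ℕ} (hi : i < n) (hedge : D.edge (f (i + 1)) (f i)) :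
    f i ∈ D.ancestors W := by
  induction i with
  | zero => exact D.subset_ancestors W h0
  | succ i ih =>
    rcases h.step i (by omega) with ⟨hfwd, -⟩ | ⟨hbwd, -⟩
    · exact ancestors_mono hS (h.collider i hi hfwd hedge)
    · exact mem_ancestors_of_edge hbwd (ih (by omega) hbwd)

theorem ActivePath.reflTransGen_moralAdj (h : D.ActivePath Z S n f) (hS : S ⊆ W) (h0 : f 0 ∈ W)
    (hn : f n ∈ W) (h0Z : f 0 ∉ Z) (hnZ : f n ∉ Z) :
    Relation.ReflTransGen (D.MoralAdj Z W) (f 0) (f n) := by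
  have reach : ∀ i ≤ n, ∃ b, Relation.ReflTransGen (D.MoralAdj Z W) (f 0) b ∧ b ∉ Z ∧
      b ∈ D.family (f i) := by
    intro i hi
    induction i with
    | zero => exact ⟨f 0, .refl, h0Z, .inl rfl⟩
    | succ i ih =>
      obtain ⟨b, hb, hbZ, hbi⟩ := ih (by omega)
      rcases h.step i hi with ⟨hfwd, hiZ⟩ | ⟨hbwd, hiZ⟩
      · have hi' := mem_ancestors_of_edge hfwd (h.head_mem_ancestors_of_edge hS hn hi hfwd)
        exact ⟨f i, hb.tail ⟨hbZ, hiZ, f i, hi', hbi, .inl rfl⟩, hiZ, .inr hfwd⟩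
      · have hi' := h.head_mem_ancestors_of_edge_symm hS h0 hi hbwd
        exact ⟨f (i + 1), hb.tail ⟨hbZ, hiZ, f i, hi', hbi, .inr hbwd⟩, hiZ, .inl rfl⟩
  obtain ⟨b, hb, hbZ, hbn⟩ := reach n le_rfl
  exact hb.tail ⟨hbZ, hnZ, f n, D.subset_ancestors W hn, hbn, .inl rfl⟩

theorem activeReach_of_not_blocked (p : GPath D.Adj x y) (hp : ¬ p.Blocked D S) :
    D.ActiveReach (S \ {x, y}) S x y := by
  obtain ⟨n, f, inj, rfl, rfl, adj⟩ := p
  let g : ℕ → V := fun i => f (Fin.ofNat (n + 1) i)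
  have hg : ∀ i (hi : i < n + 1), g i = f ⟨i, hi⟩ := fun i hi =>
    congrArg f (Fin.ext (Nat.mod_eq_of_lt hi))
  have hcol : ∀ i, i + 1 < n → D.edge (g i) (g (i + 1)) → D.edge (g (i + 2)) (g (i + 1)) →
      g (i + 1) ∈ D.ancestors S := by
    intro i hi hl hr
    rw [hg i (by omega), hg (i + 1) (by omega)] at hl
    rw [hg (i + 2) (by omega), hg (i + 1) (by omega)] at hr
    rw [hg (i + 1) (by omega)]
    by_contra hn
    exact hp ⟨i + 1, by omega, hi, .inr ⟨⟨by omega, hi, hl, hr⟩, fun d hd hdS => hn ⟨d, hdS, hd⟩⟩⟩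
  have hnoncol : ∀ i, i + 1 < n →
      ¬ (D.edge (g i) (g (i + 1)) ∧ D.edge (g (i + 2)) (g (i + 1))) → g (i + 1) ∉ S := by
    intro i hi hn hS
    rw [hg i (by omega), hg (i + 1) (by omega), hg (i + 2) (by omega)] at hn
    rw [hg (i + 1) (by omega)] at hS
    exact hp ⟨i + 1, by omega, hi, .inl ⟨fun ⟨_, _, h⟩ => hn h, hS⟩⟩
  refine ⟨n, g, hg 0 (by omega), hg n (by omega), fun i hi j hj hij => ?_, fun i hi => ?_, hcol⟩
  · rw [hg i (Nat.lt_succ_of_le hi), hg j (Nat.lt_succ_of_le hj)] at hij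
    exact congrArg Fin.val (inj hij)
  · have hadj : D.Adj (g i) (g (i + 1)) := by
      rw [hg i (by omega), hg (i + 1) (by omega)]
      exact adj ⟨i, hi⟩
    refine hadj.imp (fun hfwd => ⟨hfwd, fun hS => ?_⟩) fun hbwd => ⟨hbwd, fun hS => ?_⟩
    · cases i with
      | zero => exact hS.2 (.inl (hg 0 (by omega)))
      | succ i => exact hnoncol i hi (fun h => edge_asymm hfwd h.2) hS.1
    · rcases Nat.lt_or_eq_of_le (Nat.succ_le_of_lt hi) with hi' | rfl
      · exact hnoncol i hi' (fun h => edge_asymm hbwd h.1) hS.1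
      · exact hS.2 (.inr (hg _ (by omega)))

theorem ActivePath.not_dSep (hf : D.ActivePath (S \ {f 0, f n}) S n f) :
    ¬ D.dSep (f 0) (f n) S := by
  intro h
  obtain ⟨i, hi0, (hin : i < n), hblocked⟩ := h ⟨n, fun i => f i,
    fun i j hij => Fin.ext (hf.injOn (Nat.le_of_lt_succ i.2) (Nat.le_of_lt_succ j.2) hij), rfl, rfl,
    fun i => (hf.step i i.2).imp And.left And.left⟩
  obtain ⟨i, rfl⟩ : ∃ j, i = j + 1 := Nat.exists_eq_succ_of_ne_zero hi0.ne'
  rcases hblocked with ⟨hncol, hS⟩ | ⟨⟨_, _, hl, hr⟩, hd⟩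
  · have hZ : f (i + 1) ∈ S \ {f 0, f n} := by
      refine ⟨hS, ?_⟩
      rintro (h0 | hn)
      · exact hi0.ne' (hf.injOn hin.le (Nat.zero_le n) h0)
      · exact hin.ne (hf.injOn hin.le Set.self_mem_Iic hn)
    have hl := (hf.step i (by omega)).resolve_right fun h => h.2 hZ
    have hr := (hf.step (i + 1) hin).resolve_left fun h => h.2 hZ
    exact hncol ⟨hi0, hin, hl.1, hr.1⟩
  · obtain ⟨s, hs, his⟩ := hf.collider i hin hl hr
    exact hd s his hs

theorem not_dSep_iff_activeReach : ¬ D.dSep x y S ↔ D.ActiveReach (S \ {x, y}) S x y := by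
  refine ⟨fun h => ?_, ?_⟩
  · obtain ⟨p, hp⟩ := not_forall.1 h
    exact activeReach_of_not_blocked p hp
  · rintro ⟨n, f, rfl, rfl, hf⟩
    exact hf.not_dSep

theorem not_dSep_iff_moralAdj : ¬ D.dSep x y S ↔
    Relation.ReflTransGen (D.MoralAdj (S \ {x, y}) (insert x (insert y S))) x y := by
  rw [not_dSep_iff_activeReach]
  refine ⟨?_, fun h => (activeReach_of_moralAdj Set.sdiff_subset h).elim id id⟩
  rintro ⟨n, f, rfl, rfl, hf⟩
  exact hf.reflTransGen_moralAdj (fun _ h => .inr (.inr h)) (.inl rfl) (.inr (.inl rfl))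
    (by simp) (by simp)

end Moralization

section MarkovEquivalence

variable {S W Z : Set V}

theorem Adj.not_dSep (h : D.Adj a b) (S : Set V) : ¬ D.dSep a b S := by
  refine not_dSep_iff_moralAdj.2 (.single ⟨by simp, by simp, ?_⟩)
  rcases h with h | h
  · exact ⟨b, D.subset_ancestors _ (by simp), .inr h, .inl rfl⟩
  · exact ⟨a, D.subset_ancestors _ (by simp), .inl rfl, .inr h⟩

theorem VStruct.not_dSep (h : D.VStruct a b c) (hb : b ∈ S) : ¬ D.dSep a c S :=
  not_dSep_iff_moralAdj.2 (.single ⟨by simp, by simp, b,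
    D.subset_ancestors _ (by simp [hb]), .inr h.left, .inr h.right⟩)

theorem MoralAdj.eq_of_not_adj (h : D.MoralAdj Z W a c) (hne : a ≠ b) (hab : ¬ D.Adj a b)
    (hW : D.ancestors W ⊆ D.ancestors {a, b}) (hZ : D.ancestors {a, b} \ {a, b} ⊆ Z) : c = a := by
  obtain ⟨-, hcZ, e, he, hae, hce⟩ := h
  have hc : c ∈ D.ancestors {a, b} := hW (hce.elim (fun h => h ▸ he) (mem_ancestors_of_edge · he))
  refine (not_imp_comm.1 (fun h => hZ ⟨hc, h⟩) hcZ).resolve_right ?_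
  rintro rfl
  rcases hae, hce with ⟨rfl | hae, rfl | hce⟩
  · exact hne rfl
  · exact hab (.inr hce)
  · exact hab (.inl hae)
  · obtain ⟨w, rfl | rfl, hew⟩ := hW he
    exacts [D.acyclic _ _ hae hew, D.acyclic _ _ hce hew]

theorem dSep_ancestors (hne : a ≠ b) (hab : ¬ D.Adj a b) :
    D.dSep a b (D.ancestors {a, b} \ {a, b}) := by
  by_contra hconn
  have hW : insert a (insert b (D.ancestors {a, b} \ {a, b})) ⊆ D.ancestors {a, b} :=
    Set.insert_subset (D.subset_ancestors _ (by simp)) <|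
      Set.insert_subset (D.subset_ancestors _ (by simp)) Set.sdiff_subset
  refine hne (eq_of_reflTransGen (fun v hv => ?_) (not_dSep_iff_moralAdj.1 hconn)).symm
  exact hv.eq_of_not_adj hne hab (ancestors_subset_ancestors hW) fun v hv => ⟨hv, hv.2⟩

theorem adj_iff_forall_not_dSep (hne : a ≠ b) : D.Adj a b ↔ ∀ S, ¬ D.dSep a b S :=
  ⟨Adj.not_dSep, fun h => by_contra fun hab => h _ (dSep_ancestors hne hab)⟩

theorem vStruct_iff_forall_notMem (hne : a ≠ c) (hac : ¬ D.Adj a c) (hab : D.Adj a b)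
    (hcb : D.Adj c b) : D.VStruct a b c ↔ ∀ S, D.dSep a c S → b ∉ S := by
  refine ⟨fun h S hS hb => h.not_dSep hb hS, fun h => ?_⟩
  have hb : b ∉ D.ancestors {a, c} := fun hb =>
    h _ (dSep_ancestors hne hac) ⟨hb, by simp [hab.ne.symm, hcb.ne.symm]⟩
  refine ⟨hab.resolve_right fun hba => hb ?_, hcb.resolve_right fun hbc => hb ?_, hne, hac⟩
  · exact ⟨a, by simp, .single hba⟩
  · exact ⟨c, by simp, .single hbc⟩

theorem MEquiv.symm (h : D.MEquiv D') : D'.MEquiv D := fun x y S => (h x y S).symm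

theorem MEquiv.adj_iff (h : D.MEquiv D') : D.Adj a b ↔ D'.Adj a b := by
  rcases eq_or_ne a b with rfl | hne
  · exact iff_of_false (fun h => h.ne rfl) fun h => h.ne rfl
  · rw [adj_iff_forall_not_dSep hne, adj_iff_forall_not_dSep hne]
    exact forall_congr' fun S => not_congr (h a b S)

theorem MEquiv.vStruct (h : D.MEquiv D') (hv : D.VStruct a b c) : D'.VStruct a b c := by
  have hac := mt h.adj_iff.2 hv.not_adj
  have hab := h.adj_iff.1 (.inl hv.left)
  have hcb := h.adj_iff.1 (.inl hv.right)
  rw [vStruct_iff_forall_notMem hv.ne hac hab hcb]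
  exact fun S hS hb => hv.not_dSep hb ((h a c S).2 hS)

theorem MEquiv.samePattern (h : D.MEquiv D') : SamePattern D D' :=
  ⟨fun _ _ => h.adj_iff, fun _ _ _ => ⟨h.vStruct, h.symm.vStruct⟩⟩

end MarkovEquivalence

section VermaPearl

/-- `D'` arises from `D` by reversing the covered edge `u → v`, that is, an edge such that the
parents of `v` are those of `u` together with `u` itself. -/
structure CoveredReversal (D D' : Dag V) (u v : V) : Prop where
  edge : D.edge u v
  covered : ∀ p, D.edge p v ↔ D.edge p u ∨ p = u
  edge_iff : ∀ a b, D'.edge a b ↔ D.edge a b ∧ ¬(a = u ∧ b = v) ∨ a = v ∧ b = u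

variable {u v x y : V} {S W Z : Set V}

theorem exists_coveredReversal (huv : D.edge u v)
    (hcov : ∀ p, D.edge p v ↔ D.edge p u ∨ p = u) : ∃ D', CoveredReversal D D' u v := by
  let R : V → V → Prop := (fun a b => a = v ∧ b = u) ⊔ fun a b => D.edge a b ∧ ¬(a = u ∧ b = v)
  have avoids : ∀ c, Relation.ReflTransGen R u c → c ≠ v ∧ D.Anc u c := by
    intro c huc
    induction huc with
    | refl => exact ⟨Adj.ne (.inl huv), .refl⟩
    | @tail b c _ hbc ih =>
      obtain ⟨hbv, hub⟩ := ih
      rcases hbc with hbc | ⟨hbc, hne⟩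
      · exact (hbv hbc.1).elim
      · refine ⟨?_, hub.tail hbc⟩
        rintro rfl
        have hbu : D.edge b u := ((hcov b).1 hbc).resolve_right fun h => hne ⟨h, rfl⟩
        exact D.acyclic b u hbu hub
  refine ⟨⟨R, acyclic_sup (fun a b hab hba => ?_) ?_⟩, huv, hcov, fun a b => or_comm⟩
  · exact D.acyclic a b hab.1 (Relation.ReflTransGen.mono (fun _ _ => And.left) _ _ hba)
  · rintro a b ⟨rfl, rfl⟩ hba
    exact (avoids a hba).1 rfl

namespace CoveredReversal

theorem symm (h : CoveredReversal D D' u v) : CoveredReversal D' D v u := by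
  have hne : u ≠ v := Adj.ne (.inl h.edge)
  have hvu : ¬ D.edge v u := edge_asymm h.edge
  have huu : ¬ D.edge u u := D.edge_irrefl u
  refine ⟨(h.edge_iff v u).2 (.inr ⟨rfl, rfl⟩), fun p => ?_, fun a b => ?_⟩
  · have := h.covered p
    have := h.edge_iff p
    grind
  · have := h.edge
    have := h.edge_iff a b
    grind

theorem adj_iff (h : CoveredReversal D D' u v) : D.Adj a b ↔ D'.Adj a b := by
  have := h.edge
  have := h.edge_iff a b
  have := h.edge_iff b a
  unfold Adj
  grind

theorem edge_of_vStruct (h : CoveredReversal D D' u v) (hv : D.VStruct a b c) : D'.edge a b := by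
  refine (h.edge_iff a b).2 (.inl ⟨hv.left, ?_⟩)
  rintro ⟨rfl, rfl⟩
  exact ((h.covered c).1 hv.right).elim (fun hca => hv.not_adj (.inr hca)) hv.ne.symm

theorem vStruct (h : CoveredReversal D D' u v) (hv : D.VStruct a b c) : D'.VStruct a b c :=
  ⟨h.edge_of_vStruct hv, h.edge_of_vStruct hv.symm, hv.ne, mt h.adj_iff.2 hv.not_adj⟩

theorem samePattern (h : CoveredReversal D D' u v) : SamePattern D D' :=
  ⟨fun _ _ => h.adj_iff, fun _ _ _ => ⟨h.vStruct, h.symm.vStruct⟩⟩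

theorem family_eq (h : CoveredReversal D D' u v) (hu : c ≠ u) (hv : c ≠ v) :
    D.family c = D'.family c := by
  ext a
  simp [family, Pa, h.edge_iff, hu, hv]

theorem family_right (h : CoveredReversal D D' u v) : D.family v = D'.family u := by
  ext a
  have hne : u ≠ v := Adj.ne (.inl h.edge)
  simp only [family, Pa, Set.mem_insert_iff, Set.mem_ofPred_eq, h.edge_iff, h.covered]
  grind

theorem family_left_subset (h : CoveredReversal D D' u v) : D.family u ⊆ D'.family u :=
  h.family_right ▸ Set.insert_subset (.inr h.edge) fun p hp => .inr ((h.covered p).2 (.inl hp))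

theorem family_right_subset (h : CoveredReversal D D' u v) :
    D.family v ⊆ insert u (D'.family v) := by
  intro a ha
  simp only [family, Pa, Set.mem_insert_iff, Set.mem_ofPred_eq, h.edge_iff] at ha ⊢
  tauto

theorem mem_ancestors (h : CoveredReversal D D' u v) (ha : a ∈ D.ancestors W) :
    a ∈ D'.ancestors W ∨ a = u ∧ v ∈ D'.ancestors W := by
  obtain ⟨w, hw, haw⟩ := ha
  induction haw using Relation.ReflTransGen.head_induction_on with
  | refl => exact .inl (D'.subset_ancestors W hw)
  | @head a b hab _ ih =>
    by_cases hauv : a = u ∧ b = v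
    · obtain ⟨rfl, rfl⟩ := hauv
      exact .inr ⟨rfl, ih.resolve_right fun hba => Adj.ne (.inl h.edge) hba.1.symm⟩
    have hab' : D'.edge a b := (h.edge_iff a b).2 (.inl ⟨hab, hauv⟩)
    rcases ih with hb | ⟨rfl, hv⟩
    · exact .inl (mem_ancestors_of_edge hab' hb)
    · have hav : D'.edge a v := (h.edge_iff a v).2
        (.inl ⟨(h.covered a).2 (.inl hab), fun hau => D.edge_irrefl b (hau.1 ▸ hab)⟩)
      exact .inl (mem_ancestors_of_edge hav hv)

theorem moralAdj_of_mem (h : CoveredReversal D D' u v) (hu : u ∈ D'.ancestors W)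
    (hab : D.MoralAdj Z W a b) : D'.MoralAdj Z W a b := by
  obtain ⟨ha, hb, c, hc, hac, hbc⟩ := hab
  refine ⟨ha, hb, ?_⟩
  by_cases hcu : c = u
  · subst hcu
    exact ⟨c, hu, h.family_left_subset hac, h.family_left_subset hbc⟩
  by_cases hcv : c = v
  · subst hcv
    exact ⟨u, hu, h.family_right ▸ hac, h.family_right ▸ hbc⟩
  · exact ⟨c, (h.mem_ancestors hc).resolve_right fun hcu' => hcu hcu'.1,
      h.family_eq hcu hcv ▸ hac, h.family_eq hcu hcv ▸ hbc⟩

theorem moralAdj_or_of_notMem (h : CoveredReversal D D' u v) (hu : u ∉ D'.ancestors W)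
    (hab : D.MoralAdj Z W a b) : a ≠ u ∧ b ≠ u ∧ D'.MoralAdj Z W a b ∨
      v ∈ D'.ancestors W ∧ a ∈ insert u (D'.family v) ∧ b ∈ insert u (D'.family v) := by
  obtain ⟨ha, hb, c, hc, hac, hbc⟩ := hab
  rcases h.mem_ancestors hc with hc' | ⟨rfl, hv⟩
  · by_cases hcv : c = v
    · subst hcv
      exact .inr ⟨hc', h.family_right_subset hac, h.family_right_subset hbc⟩
    have hcu : c ≠ u := ne_of_mem_of_not_mem hc' hu
    rw [h.family_eq hcu hcv] at hac hbc
    have ne_u : ∀ p ∈ D'.family c, p ≠ u := fun p hp => ne_of_mem_of_not_mem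
      (hp.elim (fun hpc => hpc ▸ hc') fun hpc => mem_ancestors_of_edge hpc hc') hu
    exact .inl ⟨ne_u a hac, ne_u b hbc, ha, hb, c, hc', hac, hbc⟩
  · have sub : D.family c ⊆ insert c (D'.family v) :=
      h.family_left_subset.trans (h.family_right ▸ h.family_right_subset)
    exact .inr ⟨hv, sub hac, sub hbc⟩

theorem reflTransGen_moralAdj (h : CoveredReversal D D' u v) (hx : x ∈ W) (hy : y ∈ W)
    (hxZ : x ∉ Z) (hxy : Relation.ReflTransGen (D.MoralAdj Z W) x y) :
    Relation.ReflTransGen (D'.MoralAdj Z W) x y := by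
  by_cases hu : u ∈ D'.ancestors W
  · exact Relation.ReflTransGen.mono (fun _ _ => h.moralAdj_of_mem hu) _ _ hxy
  have ne_u : ∀ {w}, w ∈ W → w ≠ u := fun hw => ne_of_mem_of_not_mem (D'.subset_ancestors W hw) hu
  -- A visit to `u` is replaced by waiting at a neighbour of `u`, which lies in the family of `v`.
  have detour : ∀ b, Relation.ReflTransGen (D.MoralAdj Z W) x b →
      ∃ b', Relation.ReflTransGen (D'.MoralAdj Z W) x b' ∧ b' ∉ Z ∧
        (b ≠ u ∧ b' = b ∨ b = u ∧ b' ∈ D'.family v) := by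
    intro b hxb
    induction hxb with
    | refl => exact ⟨x, .refl, hxZ, .inl ⟨ne_u hx, rfl⟩⟩
    | @tail b c _ hbc ih =>
      obtain ⟨b', hb', hbZ, hbb'⟩ := ih
      rcases h.moralAdj_or_of_notMem hu hbc with ⟨hb, hc, hbc'⟩ | ⟨hv, hb, hc⟩
      · obtain rfl : b' = b := (hbb'.resolve_right fun hbu => hb hbu.1).2
        exact ⟨c, hb'.tail hbc', hbc.2.1, .inl ⟨hc, rfl⟩⟩
      · have hbv : b' ∈ D'.family v :=
          hbb'.elim (fun hbu => hbu.2 ▸ hb.resolve_left hbu.1) And.right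
        by_cases hcu : c = u
        · exact ⟨b', hb', hbZ, .inr ⟨hcu, hbv⟩⟩
        · exact ⟨c, hb'.tail ⟨hbZ, hbc.2.1, v, hv, hbv, hc.resolve_left hcu⟩, hbc.2.1,
            .inl ⟨hcu, rfl⟩⟩
  obtain ⟨y', hxy', -, ⟨-, rfl⟩ | ⟨hyu, -⟩⟩ := detour y hxy
  · exact hxy'
  · exact (ne_u hy hyu).elim

theorem not_dSep (h : CoveredReversal D D' u v) (hS : ¬ D.dSep x y S) : ¬ D'.dSep x y S :=
  not_dSep_iff_moralAdj.2 <| h.reflTransGen_moralAdj (.inl rfl) (.inr (.inl rfl)) (by simp)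
    (not_dSep_iff_moralAdj.1 hS)

theorem mEquiv (h : CoveredReversal D D' u v) : D.MEquiv D' :=
  fun _ _ _ => not_iff_not.1 ⟨h.not_dSep, h.symm.not_dSep⟩

end CoveredReversal

/-- The edges of `D` that have the opposite direction in `D'`. -/
def oppositeEdges (D D' : Dag V) : Set (V × V) := {e | D.edge e.1 e.2 ∧ D'.edge e.2 e.1}

theorem SamePattern.edge_of_edge (hs : SamePattern D D') (hab : D.edge a b)
    (hn : (a, b) ∉ D.oppositeEdges D') : D'.edge a b :=
  ((hs.adj_iff a b).1 (.inl hab)).resolve_right fun hba => hn ⟨hab, hba⟩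

/-- The oppositely directed edge `u → v` is chosen with `v` as early as possible in `D` and then
`u` as late as possible. -/
theorem SamePattern.exists_covered_mem_oppositeEdges [Finite V] (hs : SamePattern D D')
    (hne : (D.oppositeEdges D').Nonempty) :
    ∃ u v, (u, v) ∈ D.oppositeEdges D' ∧ ∀ p, D.edge p v ↔ D.edge p u ∨ p = u := by
  obtain ⟨⟨a, b⟩, hab⟩ := hne
  obtain ⟨v, ⟨u₀, hu₀⟩, hfirst⟩ := D.wellFounded_edge.has_min
    {v | ∃ u, (u, v) ∈ D.oppositeEdges D'} ⟨b, a, hab⟩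
  obtain ⟨u, ⟨huv, hvu⟩, hlast⟩ := D.wellFounded_flip_edge.has_min
    {u | (u, v) ∈ D.oppositeEdges D'} ⟨u₀, hu₀⟩
  refine ⟨u, v, ⟨huv, hvu⟩, fun p => ⟨fun hpv => or_iff_not_imp_right.2 fun hpu => ?_, ?_⟩⟩
  · have hadj : D.Adj p u := by
      by_contra hn
      exact edge_asymm hvu ((hs.vStruct_iff p v u).1 ⟨hpv, huv, hpu, hn⟩).right
    refine hadj.resolve_right fun hup => ?_
    have hpv' : D'.edge p v := hs.edge_of_edge hpv fun hmem => hlast p hmem hup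
    have hpu' : D'.edge p u := edge_of_edge_of_edge hpv' hvu ((hs.adj_iff p u).1 hadj)
    exact hfirst p ⟨u, hup, hpu'⟩ hpv
  · rintro (hpu | rfl)
    · have hpu' : D'.edge p u := hs.edge_of_edge hpu fun hmem => hfirst u ⟨p, hmem⟩ huv
      refine edge_of_edge_of_edge hpu huv (by_contra fun hn => ?_)
      have hpv : p ≠ v := by
        rintro rfl
        exact edge_asymm hpu huv
      exact edge_asymm huv
        ((hs.vStruct_iff p u v).2 ⟨hpu', hvu, hpv, mt (hs.adj_iff p v).2 hn⟩).right
    · exact huv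

theorem CoveredReversal.oppositeEdges_ssubset (h : CoveredReversal D D' u v) {D'' : Dag V}
    (huv : (u, v) ∈ D.oppositeEdges D'') : D'.oppositeEdges D'' ⊂ D.oppositeEdges D'' := by
  refine (Set.ssubset_iff_of_subset ?_).2 ⟨(u, v), huv, fun hmem => ?_⟩
  · rintro ⟨a, b⟩ ⟨hab, hba⟩
    rcases (h.edge_iff a b).1 hab with hab | ⟨rfl, rfl⟩
    · exact ⟨hab.1, hba⟩
    · exact (edge_asymm huv.2 hba).elim
  · exact edge_asymm hmem.1 h.symm.edge

/-- Chickering's argument: oppositely directed edges are removed one covered reversal at a time. -/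
theorem SamePattern.mEquiv [Finite V] (hs : SamePattern D D') : D.MEquiv D' := by
  induction hO : D.oppositeEdges D' using WellFoundedLT.induction generalizing D with
  | ind O ih =>
    subst hO
    rcases (D.oppositeEdges D').eq_empty_or_nonempty with hO | hO
    · have hedge : D.edge = D'.edge := by
        ext a b
        refine ⟨fun hab => hs.edge_of_edge hab (by simp [hO]), fun hab => ?_⟩
        exact ((hs.adj_iff a b).2 (.inl hab)).resolve_right fun hba =>
          hO.subset (show (b, a) ∈ _ from ⟨hba, hab⟩)
      cases D
      cases D'
      cases hedge
      exact fun _ _ _ => Iff.rfl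
    · obtain ⟨u, v, huv, hcov⟩ := hs.exists_covered_mem_oppositeEdges hO
      obtain ⟨D₁, h⟩ := exists_coveredReversal huv.1 hcov
      have hD₁ := ih _ (h.oppositeEdges_ssubset huv) (h.samePattern.symm.trans hs) rfl
      exact fun x y S => (h.mEquiv x y S).trans (hD₁ x y S)

theorem mEquiv_iff_samePattern [Finite V] : D.MEquiv D' ↔ SamePattern D D' :=
  ⟨MEquiv.samePattern, SamePattern.mEquiv⟩

end VermaPearl

section Cpdag

theorem cpDir_iff_compelled [Finite V] : D.CpDir a b ↔ D.Compelled a b := by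
  refine ⟨fun h => by_contra fun hab => ?_, fun h D' hD' => h.edge_of_samePattern hD'.samePattern⟩
  have hedge : D.edge a b := h D fun _ _ _ => Iff.rfl
  have hch : D.chainGraph.Adj b a := ⟨.inr hedge, fun hba => edge_asymm hedge hba.edge, hab⟩
  obtain ⟨D', hs, hba⟩ := exists_samePattern_edge hch
  exact edge_asymm hba (h D' (mEquiv_iff_samePattern.2 hs))

theorem cpUndir_iff_chainGraph_adj [Finite V] : D.CpUndir a b ↔ D.chainGraph.Adj a b := by
  simp only [CpUndir, cpDir_iff_compelled, chainGraph]

theorem CpDir.not_reflTransGen [Finite V] (hab : D.CpDir a b) :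
    ¬ Relation.ReflTransGen (D.CpUndir ⊔ D.CpDir) b a := fun hba =>
  (cpDir_iff_compelled.1 hab).not_reflTransGen <| Relation.ReflTransGen.mono
    (fun _ _ h => h.symm.imp cpDir_iff_compelled.1 cpUndir_iff_chainGraph_adj.1) _ _ hba

end Cpdag

end Dag

theorem cpdag_no_partially_directed_cycle_general [Finite V] (D : Dag V) {k : ℕ} {f : ℕ → V}
    (hstep : ∀ i < k, D.CpUndir (f i) (f ((i + 1) % k)) ∨ D.CpDir (f i) (f ((i + 1) % k))) :
    ¬ ∃ i < k, D.CpDir (f i) (f ((i + 1) % k)) := by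
  rintro ⟨i, hi, hdir⟩
  have hwalk : ∀ m, Relation.ReflTransGen (D.CpUndir ⊔ D.CpDir)
      (f ((i + 1) % k)) (f ((i + 1 + m) % k)) := by
    intro m
    induction m with
    | zero => exact .refl
    | succ m ih =>
      have hnext := hstep ((i + 1 + m) % k) (Nat.mod_lt _ (by omega))
      rw [Nat.mod_add_mod] at hnext
      exact ih.tail hnext
  have hback := hwalk (k - 1)
  rw [show i + 1 + (k - 1) = i + k by omega, Nat.add_mod_right, Nat.mod_eq_of_lt hi] at hback
  exact hdir.not_reflTransGen hback

/-- The CPDAG `G` of the MEC of a DAG contains no partially directed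
cycle: there is no sequence of `k ≥ 3` distinct nodes `f 0, …, f (k-1)` such that each
consecutive pair (cyclically) is joined by an undirected edge or an edge directed
forwards in `G`, with at least one of these edges directed. -/
theorem cpdag_no_partially_directed_cycle
    {V : Type*} [Fintype V] (D : Dag V) :
    ¬ ∃ (k : ℕ) (f : ℕ → V), 3 ≤ k ∧
        (∀ i j : ℕ, i < k → j < k → f i = f j → i = j) ∧
        (∀ i : ℕ, i < k →
          D.CpUndir (f i) (f ((i + 1) % k)) ∨ D.CpDir (f i) (f ((i + 1) % k))) ∧
        (∃ i : ℕ, i < k ∧ D.CpDir (f i) (f ((i + 1) % k))) := by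
  rintro ⟨k, f, -, -, hstep, hdir⟩
  exact cpdag_no_partially_directed_cycle_general D hstep hdir
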